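/- For every n ≥ 1 with M_n invertible, the pairing of the monic quasideterminant polynomials satisfies ⟨p_n(x), q_n(y)⟩ = Δ_n, where Δ_n = I n n − u_n ⬝ M_n⁻¹ ⬝ w_n is the (1,n+1)-quasideterminant of the (n+1)×(n+1) bimoment matrix with entries I (n−k) j (0 ≤ k, j ≤ n). Consequently, if Δ_n ≠ 0 then the rescaled polynomials p̃_n = Δ_n⁻¹ · p_n and q_n satisfy ⟨p̃_n, q_n⟩ = 1, i.e. the system is biorthonormal. -/

import Mathlib

/-!
The coefficients of `q_n` below `y ^ n` are `-M⁻¹ w`. Row `n - 1 - i` of `M (M⁻¹ w) = w` says that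
`⟨x ^ i, q_n⟩ = 0` for every `i < n`. Hence only the leading term of a monic left polynomial of
degree `n` contributes to its pairing with `q_n`, and it contributes
`⟨x ^ n, q_n⟩ = I n n - u M⁻¹ w = Δ`. Left scalars pull out of the pairing, which gives the
normalised statement.
-/

open Finset Matrix

section Bimoments

variable {R : Type*} (I : ℕ → ℕ → R) (n : ℕ)

/-- The pairing `⟨x ^ i, ∑ j ≤ n, y ^ j b_j⟩` of a monomial with a right polynomial. The polynomial
is encoded by its coefficient function `b`, whose values beyond `n` are ignored. -/
def monomialPairing [NonUnitalNonAssocSemiring R] (i : ℕ) (b : ℕ → R) : R :=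
  ∑ j ∈ range (n + 1), I i j * b j

/-- The pairing `⟨∑ i ≤ n, a_i x ^ i, ∑ j ≤ n, y ^ j b_j⟩` of a left with a right polynomial, both
encoded by their coefficient functions, whose values beyond `n` are ignored. -/
def bimomentPairing [NonUnitalNonAssocSemiring R] (a b : ℕ → R) : R :=
  ∑ i ∈ range (n + 1), ∑ j ∈ range (n + 1), a i * I i j * b j

theorem bimomentPairing_eq_sum_mul_monomialPairing [NonUnitalSemiring R] (a b : ℕ → R) :
    bimomentPairing I n a b = ∑ i ∈ range (n + 1), a i * monomialPairing I n i b := by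
  simp only [bimomentPairing, monomialPairing, mul_sum, mul_assoc]

theorem bimomentPairing_mul_left [NonUnitalSemiring R] (r : R) (a b : ℕ → R) :
    bimomentPairing I n (fun i => r * a i) b = r * bimomentPairing I n a b := by
  simp only [bimomentPairing, mul_sum, mul_assoc]

theorem monomialPairing_eq_sub_dotProduct [NonAssocRing R] (i : ℕ) {b : ℕ → R} {s : Fin n → R}
    (hb : b n = 1) (hbs : ∀ j : Fin n, b j = -s j) :
    monomialPairing I n i b = I i n - (fun j : Fin n => I i j) ⬝ᵥ s := by
  simp only [monomialPairing, sum_range_succ, sum_range, hb, hbs, mul_one, mul_neg,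
    sum_neg_distrib, neg_add_eq_sub, dotProduct]

/-- The matrix `M_n`, whose rows list the bimoments `I i j` in decreasing order of `i < n`. -/
def bimomentMatrix : Matrix (Fin n) (Fin n) R :=
  of fun k j => I (n - 1 - k) j

/-- The column `w_n` that borders `bimomentMatrix I n` on the right. -/
def bimomentColumn : Fin n → R :=
  fun k => I (n - 1 - k) n

/-- The `(1, n + 1)`-quasideterminant `Δ_n = I n n - u_n N w_n` of the bordered bimoment matrix,
where `N` stands for the inverse of `bimomentMatrix I n`. -/
def bimomentQuasideterminant [NonUnitalNonAssocRing R] (N : Matrix (Fin n) (Fin n) R) : R :=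
  I n n - (fun j : Fin n => I n j) ⬝ᵥ (N *ᵥ bimomentColumn I n)

theorem bimomentQuasideterminant_eq_sub_sum [NonUnitalRing R] (N : Matrix (Fin n) (Fin n) R) :
    bimomentQuasideterminant I n N =
      I n n - ∑ k : Fin n, ∑ j : Fin n, I n k * N k j * I (n - 1 - j) n := by
  simp only [bimomentQuasideterminant, bimomentColumn, dotProduct, mulVec, mul_sum, mul_assoc]

variable {I n}

theorem bimomentPairing_eq_mul_of_monomialPairing_eq_zero [NonUnitalSemiring R] {b : ℕ → R}
    (a : ℕ → R) (hb : ∀ i < n, monomialPairing I n i b = 0) :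
    bimomentPairing I n a b = a n * monomialPairing I n n b := by
  have lower_terms : ∑ i ∈ range n, a i * monomialPairing I n i b = 0 :=
    sum_eq_zero fun i hi => by rw [hb i (mem_range.mp hi), mul_zero]
  rw [bimomentPairing_eq_sum_mul_monomialPairing, sum_range_succ, lower_terms, zero_add]

theorem monomialPairing_eq_zero_of_mulVec_eq [NonAssocRing R] {b : ℕ → R} {s : Fin n → R}
    (hs : bimomentMatrix I n *ᵥ s = bimomentColumn I n) (hb : b n = 1)
    (hbs : ∀ j : Fin n, b j = -s j) {i : ℕ} (hi : i < n) :
    monomialPairing I n i b = 0 := by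
  have row_index : n - 1 - (n - 1 - i) = i := by lia
  have row_eq : (fun j : Fin n => I i j) ⬝ᵥ s = I i n := by
    simpa only [mulVec, bimomentMatrix, bimomentColumn, of_apply, row_index] using
      congrFun hs ⟨n - 1 - i, by lia⟩
  rw [monomialPairing_eq_sub_dotProduct I n i hb hbs, row_eq, sub_self]

theorem pairing_pn_qn_eq_quasideterminant_general [Ring R] {N : Matrix (Fin n) (Fin n) R}
    (hN : bimomentMatrix I n * N = 1) {c d : ℕ → R} (hc : c n = 1) (hd : d n = 1)
    (hdN : ∀ j : Fin n, d j = -(N *ᵥ bimomentColumn I n) j) :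
    bimomentPairing I n c d = bimomentQuasideterminant I n N ∧
      ∀ r : R, r * bimomentQuasideterminant I n N = 1 →
        bimomentPairing I n (fun i => r * c i) d = 1 := by
  have column_eq : bimomentMatrix I n *ᵥ (N *ᵥ bimomentColumn I n) = bimomentColumn I n := by
    rw [mulVec_mulVec, hN, one_mulVec]
  have pairing_eq : bimomentPairing I n c d = bimomentQuasideterminant I n N := by
    rw [bimomentPairing_eq_mul_of_monomialPairing_eq_zero c fun _ hi =>
        monomialPairing_eq_zero_of_mulVec_eq column_eq hd hdN hi,
      hc, one_mul, monomialPairing_eq_sub_dotProduct I n n hd hdN, bimomentQuasideterminant]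
  exact ⟨pairing_eq, fun r hr => by rw [bimomentPairing_mul_left, pairing_eq, hr]⟩

end Bimoments

/-- For `n ≥ 1` with `M_n` invertible, the pairing of the monic quasideterminant
polynomials satisfies `⟨p_n, q_n⟩ = Δ_n` where
`Δ_n = I n n - u_n ⬝ M_n⁻¹ ⬝ w_n` is the `(1,n+1)`-quasideterminant of the bordered
bimoment matrix.  Consequently, if `Δ_n ≠ 0` then the rescaled polynomial
`p̃_n = Δ_n⁻¹ · p_n` (coefficients `Δ_n⁻¹ * c i`) satisfies `⟨p̃_n, q_n⟩ = 1`. -/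
theorem pairing_pn_qn_eq_quasideterminant {R : Type*} [DivisionRing R] (I : ℕ → ℕ → R)
    (n : ℕ) (hn : 1 ≤ n)
    (M N : Matrix (Fin n) (Fin n) R)
    (hM : ∀ k j : Fin n, M k j = I (n - 1 - (k : ℕ)) (j : ℕ))
    (hMN : M * N = 1) (hNM : N * M = 1)
    (c d : ℕ → R)
    (hc1 : c n = 1) (hc2 : ∀ i, n < i → c i = 0)
    (hc3 : ∀ i : Fin n, c (i : ℕ) =
      -(∑ j : Fin n, I n (j : ℕ) * N j ⟨n - 1 - (i : ℕ), by have := i.isLt; omega⟩))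
    (hd1 : d n = 1) (hd2 : ∀ j, n < j → d j = 0)
    (hd3 : ∀ j : Fin n, d (j : ℕ) =
      -(∑ k : Fin n, N j k * I (n - 1 - (k : ℕ)) n))
    (Δ : R)
    (hΔ : Δ = I n n - ∑ k : Fin n, ∑ j : Fin n, I n (k : ℕ) * N k j * I (n - 1 - (j : ℕ)) n) :
    (∑ i ∈ Finset.range (n + 1), ∑ j ∈ Finset.range (n + 1), c i * I i j * d j = Δ) ∧
      (Δ ≠ 0 →
        ∑ i ∈ Finset.range (n + 1), ∑ j ∈ Finset.range (n + 1),
          (Δ⁻¹ * c i) * I i j * d j = 1) := by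
  obtain rfl : M = bimomentMatrix I n := Matrix.ext hM
  rw [hΔ, ← bimomentQuasideterminant_eq_sub_sum]
  have pairing := pairing_pn_qn_eq_quasideterminant_general hMN hc1 hd1 hd3
  exact ⟨pairing.1, fun hne => pairing.2 _ (inv_mul_cancel₀ hne)⟩
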